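/- arXiv:2510.01466 — 2 statements merged into one kernel-verified Lean document; each statement's English description precedes it below -/
import Mathlib

section
/- For every real λ₀ > 0 and all integers t ≥ 1 and Δ ≥ 3, there exists an open set F ⊆ ℂ containing the interval [0, λ₀] such that for every finite S_{t,t,t}-free simple graph G = (V,E) of maximum degree at most Δ and every assignment of weights λ = (λ_v)_{v∈V} with λ_v ∈ F for all v, the multivariate independence polynomial satisfies Z_{G,λ} ≠ 0. -/
attribute [local instance] Classical.propDecidable

/-- Multivariate independence polynomial of the induced subgraph `G[W]`:
the sum over all independent sets `S ⊆ W` of `∏ v ∈ S, lam v`. -/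
noncomputable def indepPolyOn {V : Type*} [Fintype V] (G : SimpleGraph V)
    (lam : V → ℂ) (W : Finset V) : ℂ :=
  ∑ S ∈ W.powerset, if (∀ u ∈ S, ∀ v ∈ S, ¬ G.Adj u v) then ∏ v ∈ S, lam v else 0

/-- Multivariate independence polynomial `Z_{G,λ}`. -/
noncomputable def indepPoly {V : Type*} [Fintype V] (G : SimpleGraph V)
    (lam : V → ℂ) : ℂ :=
  indepPolyOn G lam Finset.univ

/-- The subdivided claw `S_{t,t,t}`: three paths of length `t` sharing one common
endpoint (the vertex `none`). -/
def subdividedClaw (t : ℕ) : SimpleGraph (Option (Fin 3 × Fin t)) :=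
  SimpleGraph.fromRel (fun a b =>
    match a, b with
    | none, some (_, j) => (j : ℕ) = 0
    | some (i, j), some (i', j') => i = i' ∧ (j : ℕ) + 1 = (j' : ℕ)
    | _, _ => False)

/-- The open parabolic region `R(k) = {z : (Im z)² < (1/k)·Re z + 1/(4k²)}`. -/
def parabR (k : ℝ) : Set ℂ := {z : ℂ | z.im ^ 2 < z.re / k + 1 / (4 * k ^ 2)}

/-- The closed halfplane `H(t) = {z : Re z ≥ t}`. -/
def halfH (t : ℝ) : Set ℂ := {z : ℂ | t ≤ z.re}


/-!
Fix real weights `x ∈ [0, λ₀]` near the complex weights `λ` and let `ρ W` be the quotient of the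
independence polynomials of `G[W]` with weights `λ` and `x`. Conditioning on the trace `S` of an
independent set on a small set `K ⊆ W` expresses `ρ W` as a perturbation of a weighted average of
the values of `ρ` on sets smaller than `W`, with the term `S = ∅` contributing `ρ (W \ K)` itself
and having weight at least `2δ`. If all these values lie within relative distance `δ` of
`ρ (W \ K)`, this damping term absorbs the perturbation and `ρ W` is again within relative distance
`δ`. Starting from `ρ ∅ = 1` one adds vertices one at a time and never reaches `0`.

The recursion is run along explorations of `G`: `K` consists of the unexplored neighbours of the
last layer, and `S` becomes the next layer. The size of `K` stays bounded: if the last common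
ancestor of two vertices lies in a layer `m ≥ t` and at least `t` layers above them, then the two
descents from it together with the way back up to the root contain an induced `S_{t,t,t}`. Hence, in
an `S_{t,t,t}`-free graph, vertices of one layer with a common ancestor in layer `t` are at distance
at most `2t`.
-/

section IndependencePolynomial

variable {V : Type*} {G : SimpleGraph V} {S W K : Finset V}

/-- The vertices of `W` that have a neighbour in `S`. -/
noncomputable def neighborsIn (G : SimpleGraph V) (S W : Finset V) : Finset V :=
  {v ∈ W | ∃ s ∈ S, G.Adj s v}

theorem mem_neighborsIn {v : V} : v ∈ neighborsIn G S W ↔ v ∈ W ∧ ∃ s ∈ S, G.Adj s v :=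
  Finset.mem_filter

theorem neighborsIn_subset : neighborsIn G S W ⊆ W :=
  Finset.filter_subset _ _

/-- The vertices of `W` that remain available to an independent set of `G[W]` once its trace on
`K` is fixed to be `S`. -/
noncomputable def freeVertices (G : SimpleGraph V) (W K S : Finset V) : Finset V :=
  (W \ K) \ neighborsIn G S (W \ K)

theorem freeVertices_subset_sdiff : freeVertices G W K S ⊆ W \ K :=
  Finset.sdiff_subset

theorem freeVertices_empty : freeVertices G W K ∅ = W \ K := by
  simp [freeVertices, neighborsIn]

/-- The independent sets of `G` contained in `W`. -/
noncomputable def indepFinsets (G : SimpleGraph V) (W : Finset V) : Finset (Finset V) :=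
  {S ∈ W.powerset | G.IsIndepSet (S : Set V)}

theorem mem_indepFinsets : S ∈ indepFinsets G W ↔ S ⊆ W ∧ G.IsIndepSet (S : Set V) := by
  simp [indepFinsets]

theorem empty_mem_indepFinsets : ∅ ∈ indepFinsets G W := by
  simp [mem_indepFinsets, SimpleGraph.IsIndepSet]

theorem indepFinsets_mono {W' : Finset V} (h : W ⊆ W') : indepFinsets G W ⊆ indepFinsets G W' :=
  Finset.filter_subset_filter _ (Finset.powerset_mono.2 h)

theorem union_mem_indepFinsets_iff {A B : Finset V} (hA : A ⊆ K) (hB : B ⊆ W \ K) (hKW : K ⊆ W) :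
    A ∪ B ∈ indepFinsets G W ↔
      A ∈ indepFinsets G K ∧ B ∈ indepFinsets G (freeVertices G W K A) := by
  have hdisj : ∀ a ∈ A, ∀ b ∈ B, a ≠ b := fun a ha b hb hab =>
    (Finset.mem_sdiff.1 (hB hb)).2 (hab ▸ hA ha)
  have hAB : A ∪ B ⊆ W := Finset.union_subset (hA.trans hKW) (hB.trans Finset.sdiff_subset)
  have hfar : B ⊆ freeVertices G W K A ↔ ∀ a ∈ A, ∀ b ∈ B, ¬ G.Adj a b := by
    simp only [Finset.subset_iff, freeVertices, Finset.mem_sdiff (s := W \ K), mem_neighborsIn]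
    grind
  have hunion : G.IsIndepSet ((A ∪ B : Finset V) : Set V) ↔
      G.IsIndepSet (A : Set V) ∧ G.IsIndepSet (B : Set V) ∧ ∀ a ∈ A, ∀ b ∈ B, ¬ G.Adj a b := by
    simp only [SimpleGraph.IsIndepSet, Finset.coe_union, Set.pairwise_union, Finset.mem_coe,
      G.adj_comm]
    grind
  simp only [mem_indepFinsets, hAB, hA, hfar, hunion, true_and]
  tauto

/-- The independence polynomial of the induced subgraph `G[W]`, with weights in an arbitrary
commutative semiring so that real and complex weights are treated alike. -/
noncomputable def indepSum {R : Type*} [CommSemiring R] (G : SimpleGraph V) (w : V → R)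
    (W : Finset V) : R :=
  ∑ S ∈ indepFinsets G W, ∏ v ∈ S, w v

theorem indepPoly_eq_indepSum [Fintype V] (lam : V → ℂ) :
    indepPoly G lam = indepSum G lam Finset.univ := by
  simp only [indepPoly, indepPolyOn, indepSum, indepFinsets, Finset.sum_filter]
  refine Finset.sum_congr rfl fun S _ => if_congr ?_ rfl rfl
  refine ⟨fun h u hu v hv _ => h u hu v hv, fun h u hu v hv huv => h hu hv huv.ne huv⟩

theorem indepSum_empty {R : Type*} [CommSemiring R] (w : V → R) : indepSum G w ∅ = 1 := by
  have : indepFinsets G ∅ = {∅} := by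
    ext S
    simp +contextual [mem_indepFinsets, SimpleGraph.IsIndepSet]
  simp [indepSum, this]

theorem indepSum_eq_sum_indepFinsets {R : Type*} [CommSemiring R] (w : V → R) (hKW : K ⊆ W) :
    indepSum G w W = ∑ S ∈ indepFinsets G K,
      (∏ v ∈ S, w v) * indepSum G w (freeVertices G W K S) := by
  simp only [indepSum, Finset.mul_sum]
  rw [Finset.sum_sigma']
  have hsplit (S : Finset V) : S ∩ K ∪ S \ K = S := by
    rw [Finset.union_comm, Finset.sdiff_union_inter]
  have hsub {A B : Finset V} (hA : A ∈ indepFinsets G K)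
      (hB : B ∈ indepFinsets G (freeVertices G W K A)) : A ⊆ K ∧ B ⊆ W \ K :=
    ⟨(mem_indepFinsets.1 hA).1, (mem_indepFinsets.1 hB).1.trans freeVertices_subset_sdiff⟩
  refine Finset.sum_bij' (fun S _ => ⟨S ∩ K, S \ K⟩) (fun p _ => p.1 ∪ p.2) ?_ ?_ ?_ ?_ ?_
  · intro S hS
    have hSW : S \ K ⊆ W \ K := Finset.sdiff_subset_sdiff (mem_indepFinsets.1 hS).1 subset_rfl
    rw [Finset.mem_sigma, ← union_mem_indepFinsets_iff Finset.inter_subset_right hSW hKW, hsplit]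
    exact hS
  · rintro ⟨A, B⟩ hAB
    obtain ⟨hA, hB⟩ := Finset.mem_sigma.1 hAB
    obtain ⟨hAK, hBK⟩ := hsub hA hB
    exact (union_mem_indepFinsets_iff hAK hBK hKW).2 ⟨hA, hB⟩
  · exact fun S _ => hsplit S
  · rintro ⟨A, B⟩ hAB
    obtain ⟨hA, hB⟩ := Finset.mem_sigma.1 hAB
    obtain ⟨hAK, hBK⟩ := hsub hA hB
    have hinter : (A ∪ B) ∩ K = A := by grind
    have hsdiff : (A ∪ B) \ K = B := by grind
    simp only [hinter, hsdiff]
  · intro S _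
    rw [← Finset.prod_union (Finset.disjoint_sdiff_inter S K).symm, hsplit]

end IndependencePolynomial

section RealWeights

variable {V : Type*} {G : SimpleGraph V} {x : V → ℝ} {W K : Finset V}

theorem indepSum_mono (hx : ∀ v, 0 ≤ x v) {W' : Finset V} (h : W ⊆ W') :
    indepSum G x W ≤ indepSum G x W' :=
  Finset.sum_le_sum_of_subset_of_nonneg (indepFinsets_mono h)
    fun _ _ _ => Finset.prod_nonneg fun v _ => hx v

theorem indepSum_pos (hx : ∀ v, 0 ≤ x v) : 0 < indepSum G x W :=
  calc (0 : ℝ) < indepSum G x ∅ := by rw [indepSum_empty]; exact one_pos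
    _ ≤ indepSum G x W := indepSum_mono hx W.empty_subset

theorem indepSum_le_prod_mul_indepSum_sdiff (hx : ∀ v, 0 ≤ x v) (hKW : K ⊆ W) :
    indepSum G x W ≤ (∏ v ∈ K, (1 + x v)) * indepSum G x (W \ K) := by
  have hprod (S : Finset V) : 0 ≤ ∏ v ∈ S, x v := Finset.prod_nonneg fun v _ => hx v
  have hpos : 0 ≤ indepSum G x (W \ K) := (indepSum_pos hx).le
  rw [indepSum_eq_sum_indepFinsets x hKW, Finset.prod_one_add, Finset.sum_mul]
  calc ∑ S ∈ indepFinsets G K, (∏ v ∈ S, x v) * indepSum G x (freeVertices G W K S)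
      ≤ ∑ S ∈ indepFinsets G K, (∏ v ∈ S, x v) * indepSum G x (W \ K) := by
        gcongr with S _
        · exact hprod S
        · exact indepSum_mono hx freeVertices_subset_sdiff
    _ ≤ ∑ S ∈ K.powerset, (∏ v ∈ S, x v) * indepSum G x (W \ K) :=
        Finset.sum_le_sum_of_subset_of_nonneg (Finset.filter_subset _ _)
          fun S _ _ => mul_nonneg (hprod S) hpos

end RealWeights

section Contraction

variable {V : Type*} {G : SimpleGraph V} {x : V → ℝ} {lam : V → ℂ} {S W K : Finset V} {δ : ℝ}

/-- The ratio between the independence polynomials of `G[W]` with complex weights `lam` and with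
real reference weights `x`. For `x ≥ 0` the denominator is positive. -/
noncomputable def indepRatio (G : SimpleGraph V) (x : V → ℝ) (lam : V → ℂ) (W : Finset V) : ℂ :=
  indepSum G lam W / ((indepSum G x W : ℝ) : ℂ)

theorem indepSum_mul_indepRatio (hx : ∀ v, 0 ≤ x v) :
    ((indepSum G x W : ℝ) : ℂ) * indepRatio G x lam W = indepSum G lam W :=
  mul_div_cancel₀ _ (Complex.ofReal_ne_zero.2 (indepSum_pos hx).ne')

theorem indepSum_mul_indepRatio_sub (hx : ∀ v, 0 ≤ x v) (hKW : K ⊆ W) (R : ℂ) :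
    ((indepSum G x W : ℝ) : ℂ) * (indepRatio G x lam W - R) = ∑ S ∈ indepFinsets G K,
      ((indepSum G x (freeVertices G W K S) : ℝ) : ℂ) *
        ((∏ v ∈ S, lam v) * indepRatio G x lam (freeVertices G W K S) -
          (∏ v ∈ S, (x v : ℂ)) * R) := by
  rw [mul_sub, indepSum_mul_indepRatio hx, indepSum_eq_sum_indepFinsets lam hKW,
    indepSum_eq_sum_indepFinsets x hKW]
  push_cast
  rw [Finset.sum_mul, ← Finset.sum_sub_distrib]
  refine Finset.sum_congr rfl fun S _ => ?_
  rw [← indepSum_mul_indepRatio (lam := lam) hx]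
  ring

theorem one_sub_mul_norm_mul_sub_mul_le {𝕜 : Type*} [NormedField 𝕜] {a b q r : 𝕜} (hδ : 0 ≤ δ)
    (hδ1 : δ ≤ 1) (hrq : ‖r - q‖ ≤ δ * ‖q‖) :
    (1 - δ) * ‖a * q - b * r‖ ≤ (‖a - b‖ + δ * ‖b‖) * ‖r‖ := by
  have hq : (1 - δ) * ‖q‖ ≤ ‖r‖ := by
    have := norm_sub_norm_le q r
    rw [norm_sub_rev] at this
    linarith
  have hsplit : ‖a * q - b * r‖ ≤ (‖a - b‖ + δ * ‖b‖) * ‖q‖ :=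
    calc ‖a * q - b * r‖ = ‖(a - b) * q - b * (r - q)‖ := by ring_nf
      _ ≤ ‖a - b‖ * ‖q‖ + ‖b‖ * ‖r - q‖ := by
        simpa only [norm_mul] using norm_sub_le ((a - b) * q) (b * (r - q))
      _ ≤ ‖a - b‖ * ‖q‖ + ‖b‖ * (δ * ‖q‖) := by gcongr
      _ = (‖a - b‖ + δ * ‖b‖) * ‖q‖ := by ring
  calc (1 - δ) * ‖a * q - b * r‖ ≤ (1 - δ) * ((‖a - b‖ + δ * ‖b‖) * ‖q‖) := by
        have : 0 ≤ 1 - δ := by linarith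
        gcongr
    _ = (‖a - b‖ + δ * ‖b‖) * ((1 - δ) * ‖q‖) := by ring
    _ ≤ (‖a - b‖ + δ * ‖b‖) * ‖r‖ := by gcongr

theorem sum_erase_empty_prod_mul_indepSum (hKW : K ⊆ W) :
    ∑ S ∈ (indepFinsets G K).erase ∅,
        (∏ v ∈ S, x v) * indepSum G x (freeVertices G W K S) =
      indepSum G x W - indepSum G x (W \ K) := by
  rw [indepSum_eq_sum_indepFinsets x hKW, Finset.sum_erase_eq_sub empty_mem_indepFinsets,
    Finset.prod_empty, one_mul, freeVertices_empty]

theorem one_sub_mul_indepSum_mul_norm_freeVertices_le (hx : ∀ v, 0 ≤ x v) (hδ : 0 ≤ δ)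
    (hδ1 : δ ≤ 1)
    (hratio : ‖indepRatio G x lam (W \ K) - indepRatio G x lam (freeVertices G W K S)‖ ≤
      δ * ‖indepRatio G x lam (freeVertices G W K S)‖) :
    (1 - δ) * (indepSum G x (freeVertices G W K S) *
        ‖(∏ v ∈ S, lam v) * indepRatio G x lam (freeVertices G W K S) -
          (∏ v ∈ S, (x v : ℂ)) * indepRatio G x lam (W \ K)‖) ≤
      (‖∏ v ∈ S, lam v - ∏ v ∈ S, (x v : ℂ)‖ * indepSum G x W +
          δ * ((∏ v ∈ S, x v) * indepSum G x (freeVertices G W K S))) *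
        ‖indepRatio G x lam (W \ K)‖ := by
  set R := indepRatio G x lam (W \ K)
  set Q := indepRatio G x lam (freeVertices G W K S)
  set e := ‖∏ v ∈ S, lam v - ∏ v ∈ S, (x v : ℂ)‖
  have hpos : 0 ≤ indepSum G x (freeVertices G W K S) := (indepSum_pos hx).le
  have hmono : indepSum G x (freeVertices G W K S) ≤ indepSum G x W :=
    indepSum_mono hx (freeVertices_subset_sdiff.trans Finset.sdiff_subset)
  have hnorm : ‖∏ v ∈ S, (x v : ℂ)‖ = ∏ v ∈ S, x v := by
    simp only [norm_prod, Complex.norm_of_nonneg (hx _)]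
  calc (1 - δ) * (indepSum G x (freeVertices G W K S) *
        ‖(∏ v ∈ S, lam v) * Q - (∏ v ∈ S, (x v : ℂ)) * R‖)
      = indepSum G x (freeVertices G W K S) *
          ((1 - δ) * ‖(∏ v ∈ S, lam v) * Q - (∏ v ∈ S, (x v : ℂ)) * R‖) := by ring
    _ ≤ indepSum G x (freeVertices G W K S) * ((e + δ * ∏ v ∈ S, x v) * ‖R‖) := by
        rw [← hnorm]
        exact mul_le_mul_of_nonneg_left (one_sub_mul_norm_mul_sub_mul_le hδ hδ1 hratio) hpos
    _ = (e * indepSum G x (freeVertices G W K S) +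
          δ * ((∏ v ∈ S, x v) * indepSum G x (freeVertices G W K S))) * ‖R‖ := by ring
    _ ≤ (e * indepSum G x W +
          δ * ((∏ v ∈ S, x v) * indepSum G x (freeVertices G W K S))) * ‖R‖ := by gcongr

theorem one_sub_mul_indepSum_mul_norm_indepRatio_sub_le (hx : ∀ v, 0 ≤ x v) (hKW : K ⊆ W)
    (hδ : 0 ≤ δ) (hδ1 : δ ≤ 1)
    (hratio : ∀ S ∈ indepFinsets G K, S.Nonempty →
      ‖indepRatio G x lam (W \ K) - indepRatio G x lam (freeVertices G W K S)‖ ≤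
        δ * ‖indepRatio G x lam (freeVertices G W K S)‖) :
    (1 - δ) * (indepSum G x W * ‖indepRatio G x lam W - indepRatio G x lam (W \ K)‖) ≤
      ((∑ S ∈ K.powerset, ‖∏ v ∈ S, lam v - ∏ v ∈ S, (x v : ℂ)‖) * indepSum G x W +
        δ * (indepSum G x W - indepSum G x (W \ K))) * ‖indepRatio G x lam (W \ K)‖ := by
  set R := indepRatio G x lam (W \ K) with hR
  set e : Finset V → ℝ := fun S => ‖∏ v ∈ S, lam v - ∏ v ∈ S, (x v : ℂ)‖
  set d : Finset V → ℂ := fun S =>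
    (∏ v ∈ S, lam v) * indepRatio G x lam (freeVertices G W K S) - (∏ v ∈ S, (x v : ℂ)) * R with hd
  have hnorm (U : Finset V) : ‖((indepSum G x U : ℝ) : ℂ)‖ = indepSum G x U :=
    Complex.norm_of_nonneg (indepSum_pos hx).le
  have hd_empty : d ∅ = 0 := by
    simp only [hd, Finset.prod_empty, freeVertices_empty, ← hR, sub_self]
  have herror : ∑ S ∈ (indepFinsets G K).erase ∅, e S ≤ ∑ S ∈ K.powerset, e S :=
    Finset.sum_le_sum_of_subset_of_nonneg
      ((Finset.erase_subset _ _).trans (Finset.filter_subset _ _)) fun S _ _ => norm_nonneg _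
  calc (1 - δ) * (indepSum G x W * ‖indepRatio G x lam W - R‖)
      = (1 - δ) * ‖∑ S ∈ (indepFinsets G K).erase ∅,
          ((indepSum G x (freeVertices G W K S) : ℝ) : ℂ) * d S‖ := by
        rw [← hnorm W, ← norm_mul, indepSum_mul_indepRatio_sub hx hKW,
          Finset.sum_erase _ (by rw [hd_empty, mul_zero])]
    _ ≤ ∑ S ∈ (indepFinsets G K).erase ∅,
          (1 - δ) * (indepSum G x (freeVertices G W K S) * ‖d S‖) := by
        rw [← Finset.mul_sum]
        refine mul_le_mul_of_nonneg_left ((norm_sum_le _ _).trans_eq ?_) (sub_nonneg.2 hδ1)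
        simp only [norm_mul, hnorm]
    _ ≤ ∑ S ∈ (indepFinsets G K).erase ∅, (e S * indepSum G x W +
          δ * ((∏ v ∈ S, x v) * indepSum G x (freeVertices G W K S))) * ‖R‖ := by
        refine Finset.sum_le_sum fun S hS => ?_
        obtain ⟨hne, hS⟩ := Finset.mem_erase.1 hS
        exact one_sub_mul_indepSum_mul_norm_freeVertices_le hx hδ hδ1
          (hratio S hS (Finset.nonempty_iff_ne_empty.2 hne))
    _ = ((∑ S ∈ (indepFinsets G K).erase ∅, e S) * indepSum G x W +
          δ * (indepSum G x W - indepSum G x (W \ K))) * ‖R‖ := by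
        rw [← sum_erase_empty_prod_mul_indepSum hKW, ← Finset.sum_mul, Finset.sum_add_distrib,
          ← Finset.sum_mul, ← Finset.mul_sum]
    _ ≤ ((∑ S ∈ K.powerset, e S) * indepSum G x W +
          δ * (indepSum G x W - indepSum G x (W \ K))) * ‖R‖ := by
        have hpos : 0 ≤ indepSum G x W := (indepSum_pos hx).le
        gcongr

theorem norm_indepRatio_sub_le (hx : ∀ v, 0 ≤ x v) (hKW : K ⊆ W) (hδ : 0 < δ)
    (hprod : 2 * δ * ∏ v ∈ K, (1 + x v) ≤ 1)
    (herror : ∑ S ∈ K.powerset, ‖∏ v ∈ S, lam v - ∏ v ∈ S, (x v : ℂ)‖ ≤ δ ^ 2)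
    (hratio : ∀ S ∈ indepFinsets G K, S.Nonempty →
      ‖indepRatio G x lam (W \ K) - indepRatio G x lam (freeVertices G W K S)‖
        ≤ δ * ‖indepRatio G x lam (freeVertices G W K S)‖) :
    ‖indepRatio G x lam W - indepRatio G x lam (W \ K)‖ ≤ δ * ‖indepRatio G x lam (W \ K)‖ := by
  have hpos : 0 < indepSum G x W := indepSum_pos hx
  have hlower : 2 * δ * indepSum G x W ≤ indepSum G x (W \ K) :=
    calc 2 * δ * indepSum G x W
        ≤ 2 * δ * ((∏ v ∈ K, (1 + x v)) * indepSum G x (W \ K)) := by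
          gcongr
          exact indepSum_le_prod_mul_indepSum_sdiff hx hKW
      _ = (2 * δ * ∏ v ∈ K, (1 + x v)) * indepSum G x (W \ K) := by ring
      _ ≤ indepSum G x (W \ K) := mul_le_of_le_one_left (indepSum_pos hx).le hprod
  have hδ1 : δ < 1 := by
    have : 2 * δ * indepSum G x W ≤ indepSum G x W :=
      hlower.trans (indepSum_mono hx Finset.sdiff_subset)
    nlinarith
  refine le_of_mul_le_mul_left ?_ (mul_pos (sub_pos.2 hδ1) hpos)
  calc (1 - δ) * indepSum G x W * ‖indepRatio G x lam W - indepRatio G x lam (W \ K)‖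
      ≤ ((∑ S ∈ K.powerset, ‖∏ v ∈ S, lam v - ∏ v ∈ S, (x v : ℂ)‖) * indepSum G x W +
          δ * (indepSum G x W - indepSum G x (W \ K))) * ‖indepRatio G x lam (W \ K)‖ := by
        rw [mul_assoc]
        exact one_sub_mul_indepSum_mul_norm_indepRatio_sub_le hx hKW hδ.le hδ1.le hratio
    _ ≤ (δ ^ 2 * indepSum G x W + δ * (indepSum G x W - 2 * δ * indepSum G x W)) *
          ‖indepRatio G x lam (W \ K)‖ := by gcongr
    _ = (1 - δ) * indepSum G x W * (δ * ‖indepRatio G x lam (W \ K)‖) := by ring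

end Contraction

section Exploration

variable {V : Type*} {G : SimpleGraph V} {L : ℕ → Finset V} {r : ℕ} {W : Finset V}

/-- A sequence of pairwise disjoint independent layers, starting from at most one root, in which
every vertex of a layer has a neighbour in the preceding layer and all edges join consecutive
layers. -/
structure IsLayering (G : SimpleGraph V) (L : ℕ → Finset V) : Prop where
  card_root_le : (L 0).card ≤ 1
  exists_adj : ∀ i, ∀ v ∈ L (i + 1), ∃ u ∈ L i, G.Adj u v
  eq_of_mem : ∀ {i j v}, v ∈ L i → v ∈ L j → i = j
  eq_of_adj : ∀ {i j u v}, u ∈ L i → v ∈ L j → G.Adj u v → i + 1 = j ∨ j + 1 = i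

/-- A snapshot of the exploration of a graph from a root: the layers `L 0, …, L r` have been
fixed, the vertices of `W` are still unexplored, and `W` meets the neighbourhood of the last
layer only. -/
structure IsExploration (G : SimpleGraph V) (L : ℕ → Finset V) (r : ℕ) (W : Finset V) : Prop
    extends IsLayering G L where
  le_of_mem : ∀ {i v}, v ∈ L i → i ≤ r
  notMem : ∀ {i v}, v ∈ L i → v ∉ W
  eq_of_adj_mem : ∀ {i u v}, u ∈ L i → v ∈ W → G.Adj u v → i = r

theorem isExploration_singleton {u : V} (hu : u ∉ W) :
    IsExploration G (Function.update (fun _ => ∅) 0 {u}) 0 W := by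
  have hmem {i v} : v ∈ Function.update (fun _ => (∅ : Finset V)) 0 {u} i ↔ i = 0 ∧ v = u := by
    rw [Function.update_apply]
    split <;> simp_all
  constructor
  · constructor <;> simp +contextual [hmem]
  all_goals simp +contextual [hmem, hu]

theorem IsExploration.extend {S : Finset V} (h : IsExploration G L r W)
    (hS : S ∈ indepFinsets G (neighborsIn G (L r) W)) :
    IsExploration G (Function.update L (r + 1) S) (r + 1) (W \ neighborsIn G (L r) W) := by
  obtain ⟨hSK, hSind⟩ := mem_indepFinsets.1 hS
  have hind {u v} (hu : u ∈ S) (hv : v ∈ S) : ¬ G.Adj u v := fun huv => hSind hu hv huv.ne huv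
  have hSmem {v} (hv : v ∈ S) : v ∈ W ∧ ∃ s ∈ L r, G.Adj s v := mem_neighborsIn.1 (hSK hv)
  have hmem {i v} : v ∈ Function.update L (r + 1) S i ↔ v ∈ L i ∨ i = r + 1 ∧ v ∈ S := by
    have hlast : v ∉ L (r + 1) := fun hv => absurd (h.le_of_mem hv) (by lia)
    rw [Function.update_apply]
    split <;> simp_all
  have hSadj {i u v} (hu : u ∈ L i) (hv : v ∈ S) : G.Adj u v → i = r :=
    h.eq_of_adj_mem hu (hSmem hv).1
  constructor
  · constructor
    · simpa using h.card_root_le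
    · grind [h.exists_adj, h.le_of_mem]
    · grind [h.eq_of_mem, h.notMem]
    · grind [h.eq_of_adj, G.adj_comm]
  · intro i v hv
    rcases hmem.1 hv with hv | ⟨rfl, -⟩
    exacts [(h.le_of_mem hv).trans r.le_succ, le_rfl]
  · grind [h.notMem]
  · grind [h.eq_of_adj_mem, mem_neighborsIn]

variable {x : V → ℝ} {lam : V → ℂ} {δ : ℝ} {b : ℕ}

theorem IsExploration.norm_indepRatio_sub_le (h : IsExploration G L r W)
    (hx : ∀ v, 0 ≤ x v) (hδ : 0 < δ)
    (hprod : ∀ K : Finset V, K.card ≤ b → 2 * δ * ∏ v ∈ K, (1 + x v) ≤ 1)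
    (herror : ∀ K : Finset V, K.card ≤ b →
      ∑ S ∈ K.powerset, ‖∏ v ∈ S, lam v - ∏ v ∈ S, (x v : ℂ)‖ ≤ δ ^ 2)
    (hcard : ∀ L r W, IsExploration G L r W → (neighborsIn G (L r) W).card ≤ b) :
    ‖indepRatio G x lam W - indepRatio G x lam (W \ neighborsIn G (L r) W)‖ ≤
      δ * ‖indepRatio G x lam (W \ neighborsIn G (L r) W)‖ := by
  induction W using Finset.strongInduction generalizing L r with
  | H W ih =>
    set K := neighborsIn G (L r) W
    rcases K.eq_empty_or_nonempty with hempty | hne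
    · rw [hempty, Finset.sdiff_empty, sub_self, norm_zero]
      positivity
    have hKW : K ⊆ W := neighborsIn_subset
    refine _root_.norm_indepRatio_sub_le hx hKW hδ (hprod K (hcard L r W h))
      (herror K (hcard L r W h)) fun S hS _ => ?_
    simpa only [freeVertices, Function.update_self] using
      ih (W \ K) (Finset.sdiff_ssubset hKW hne) (h.extend hS)

theorem indepSum_ne_zero (hx : ∀ v, 0 ≤ x v) (hδ : 0 < δ) (hb : 1 ≤ b)
    (hprod : ∀ K : Finset V, K.card ≤ b → 2 * δ * ∏ v ∈ K, (1 + x v) ≤ 1)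
    (herror : ∀ K : Finset V, K.card ≤ b →
      ∑ S ∈ K.powerset, ‖∏ v ∈ S, lam v - ∏ v ∈ S, (x v : ℂ)‖ ≤ δ ^ 2)
    (hcard : ∀ L r W, IsExploration G L r W → (neighborsIn G (L r) W).card ≤ b) :
    indepSum G lam W ≠ 0 := by
  suffices indepRatio G x lam W ≠ 0 by
    rw [← indepSum_mul_indepRatio hx]
    exact mul_ne_zero (Complex.ofReal_ne_zero.2 (indepSum_pos hx).ne') this
  induction W using Finset.induction_on with
  | empty => simp [indepRatio, indepSum_empty]
  | insert u W hu ih =>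
    have hsdiff : insert u W \ {u} = W := by grind
    have hroot : ({u} : Finset V).card ≤ b := hb
    have hstep : ‖indepRatio G x lam (insert u W) - indepRatio G x lam W‖ ≤
        δ * ‖indepRatio G x lam W‖ := by
      have := norm_indepRatio_sub_le (G := G) (W := insert u W) hx (by simp) hδ (hprod {u} hroot)
        (herror {u} hroot) fun S hS hne => ?_
      · rwa [hsdiff] at this
      · obtain rfl : S = {u} :=
          (Finset.subset_singleton_iff.1 (mem_indepFinsets.1 hS).1).resolve_left hne.ne_empty
        simpa only [freeVertices, hsdiff, Function.update_self] using
          (isExploration_singleton hu).norm_indepRatio_sub_le hx hδ hprod herror hcard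
    intro hzero
    rw [hzero, zero_sub, norm_neg] at hstep
    have hδ2 : 2 * δ ≤ 1 := by simpa using hprod ∅ b.zero_le
    nlinarith [norm_pos_iff.2 ih]

end Exploration

section BoundedDegree

variable {V : Type*} {G : SimpleGraph V} [G.LocallyFinite] {D : ℕ}

theorem card_neighborsIn_le (hD : ∀ v, G.degree v ≤ D) (S W : Finset V) :
    (neighborsIn G S W).card ≤ S.card * D := by
  have hsub : neighborsIn G S W ⊆ S.biUnion (G.neighborFinset ·) := fun v hv => by
    simpa using (mem_neighborsIn.1 hv).2
  exact (Finset.card_le_card hsub).trans (Finset.card_biUnion_le_card_mul _ _ _ fun v _ => hD v)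

theorem exists_edist_le_of_edist_le_succ {u v : V} {n : ℕ} (h : G.edist u v ≤ (n + 1 : ℕ)) :
    ∃ w ∈ insert u (G.neighborFinset u), G.edist w v ≤ n := by
  obtain ⟨p, hp⟩ := (SimpleGraph.reachable_of_edist_ne_top
    (ne_top_of_le_ne_top (ENat.natCast_ne_top _) h)).exists_walk_length_eq_edist
  rw [← hp, Nat.cast_le] at h
  cases p with
  | nil => exact ⟨u, Finset.mem_insert_self .., by simp⟩
  | @cons _ w _ huw q =>
    refine ⟨w, by simp [huw], (SimpleGraph.edist_le q).trans ?_⟩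
    exact Nat.cast_le.2 (Nat.succ_le_succ_iff.1 h)

theorem card_le_of_edist_le (hD : ∀ v, G.degree v ≤ D) {n : ℕ} {u : V} {X : Finset V}
    (hX : ∀ v ∈ X, G.edist u v ≤ n) : X.card ≤ (D + 1) ^ n := by
  induction n generalizing u X with
  | zero =>
    have : X ⊆ {u} := fun v hv => by
      simpa using (SimpleGraph.edist_eq_zero_iff.1 (nonpos_iff_eq_zero.1 (hX v hv))).symm
    simpa using Finset.card_le_card this
  | succ n ih =>
    have hcover : X ⊆ (insert u (G.neighborFinset u)).biUnion
        fun w => {v ∈ X | G.edist w v ≤ n} := fun v hv => by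
      obtain ⟨w, hw, hwv⟩ := exists_edist_le_of_edist_le_succ (hX v hv)
      exact Finset.mem_biUnion.2 ⟨w, hw, Finset.mem_filter.2 ⟨hv, hwv⟩⟩
    have hball : (insert u (G.neighborFinset u)).card ≤ D + 1 :=
      (Finset.card_insert_le _ _).trans (Nat.succ_le_succ (hD u))
    calc X.card ≤ (insert u (G.neighborFinset u)).card * (D + 1) ^ n :=
          (Finset.card_le_card hcover).trans <| Finset.card_biUnion_le_card_mul _ _ _
            fun w _ => ih fun v hv => (Finset.mem_filter.1 hv).2
      _ ≤ (D + 1) * (D + 1) ^ n := by gcongr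
      _ = (D + 1) ^ (n + 1) := (pow_succ' _ _).symm

end BoundedDegree

section SubdividedClaw

variable {V : Type*} {G : SimpleGraph V} {t : ℕ}

/-- The sequence `p 0, …, p n` is an induced path of `G`; the values `p i` with `i > n` are
irrelevant. -/
structure IsInducedPath (G : SimpleGraph V) (p : ℕ → V) (n : ℕ) : Prop where
  eq_of_eq : ∀ {i j}, i ≤ n → j ≤ n → p i = p j → i = j
  adj_iff : ∀ {i j}, i ≤ n → j ≤ n → (G.Adj (p i) (p j) ↔ i + 1 = j ∨ j + 1 = i)

theorem IsInducedPath.add {p : ℕ → V} {n m k : ℕ} (h : IsInducedPath G p n) (hmk : m + k ≤ n) :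
    IsInducedPath G (fun i => p (m + i)) k where
  eq_of_eq hi hj hij := by
    have := h.eq_of_eq (by lia) (by lia) hij
    lia
  adj_iff hi hj := by
    rw [h.adj_iff (by lia) (by lia)]
    lia

theorem IsInducedPath.sub {p : ℕ → V} {n m k : ℕ} (h : IsInducedPath G p n) (hmn : m ≤ n)
    (hkm : k ≤ m) : IsInducedPath G (fun i => p (m - i)) k where
  eq_of_eq hi hj hij := by
    have := h.eq_of_eq (by lia) (by lia) hij
    lia
  adj_iff hi hj := by
    rw [h.adj_iff (by lia) (by lia)]
    lia

theorem subdividedClaw_adj_none_some {i : Fin 3} {k : Fin t} :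
    (subdividedClaw t).Adj none (some (i, k)) ↔ (k : ℕ) = 0 := by
  simp [subdividedClaw]

theorem subdividedClaw_adj_some_some {i j : Fin 3} {k l : Fin t} :
    (subdividedClaw t).Adj (some (i, k)) (some (j, l)) ↔
      i = j ∧ ((k : ℕ) + 1 = l ∨ (l : ℕ) + 1 = k) := by
  simp only [subdividedClaw, SimpleGraph.fromRel_adj, ne_eq, Option.some.injEq, Prod.mk.injEq,
    Fin.ext_iff]
  lia

theorem nonempty_subdividedClaw_embedding {c : V} {leg : Fin 3 → ℕ → V}
    (hpath : ∀ i, IsInducedPath G (leg i) t) (hcenter : ∀ i, leg i 0 = c)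
    (hfar : ∀ {i j k l}, i ≠ j → 0 < k → k ≤ t → 0 < l → l ≤ t →
      leg i k ≠ leg j l ∧ ¬ G.Adj (leg i k) (leg j l)) :
    Nonempty (subdividedClaw t ↪g G) := by
  let f : Option (Fin 3 × Fin t) → V := fun a => a.elim c fun p => leg p.1 (p.2 + 1)
  have hcenter_ne (i : Fin 3) (k : Fin t) : c ≠ leg i (k + 1) := fun h => by
    have := (hpath i).eq_of_eq t.zero_le k.2 ((hcenter i).trans h)
    lia
  have hcenter_adj (i : Fin 3) (k : Fin t) : G.Adj c (leg i (k + 1)) ↔ (k : ℕ) = 0 := by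
    rw [← hcenter i, (hpath i).adj_iff t.zero_le k.2]
    lia
  have hinj : Function.Injective f := by
    rintro (_ | ⟨i, k⟩) (_ | ⟨j, l⟩) h
    · rfl
    · exact absurd h (hcenter_ne j l)
    · exact absurd h.symm (hcenter_ne i k)
    · obtain rfl : i = j := by
        by_contra hij
        exact (hfar hij k.val.succ_pos k.2 l.val.succ_pos l.2).1 h
      have := (hpath i).eq_of_eq k.2 l.2 h
      exact congrArg (fun k => some (i, k)) (Fin.ext (by lia))
  refine ⟨⟨⟨f, hinj⟩, fun {a b} => show G.Adj (f a) (f b) ↔ _ from ?_⟩⟩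
  rcases a with _ | ⟨i, k⟩ <;> rcases b with _ | ⟨j, l⟩
  · simp
  · exact (hcenter_adj j l).trans subdividedClaw_adj_none_some.symm
  · rw [SimpleGraph.adj_comm, (subdividedClaw t).adj_comm]
    exact (hcenter_adj i k).trans subdividedClaw_adj_none_some.symm
  · rw [subdividedClaw_adj_some_some]
    by_cases hij : i = j
    · subst hij
      simpa [f] using (hpath i).adj_iff k.2 l.2
    · simpa [f, hij] using (hfar hij k.val.succ_pos k.2 l.val.succ_pos l.2).2

end SubdividedClaw

section Descent

variable {V : Type*} {G : SimpleGraph V} {L : ℕ → Finset V} {P Q : ℕ → V} {s m t : ℕ}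

/-- A path `P 0, …, P s` descending through the layers `L 0, …, L s`; the values `P i` with
`i > s` are irrelevant. -/
structure IsDescent (G : SimpleGraph V) (L : ℕ → Finset V) (s : ℕ) (P : ℕ → V) : Prop where
  mem : ∀ {i}, i ≤ s → P i ∈ L i
  adj : ∀ {i}, i < s → G.Adj (P i) (P (i + 1))

theorem IsLayering.exists_isDescent (hL : IsLayering G L) {v : V} (hv : v ∈ L s) :
    ∃ P, IsDescent G L s P ∧ P s = v := by
  induction s generalizing v with
  | zero => exact ⟨fun _ => v, ⟨by simpa using hv, by simp⟩, rfl⟩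
  | succ s ih =>
    obtain ⟨u, hu, huv⟩ := hL.exists_adj s v hv
    obtain ⟨P, hP, rfl⟩ := ih hu
    refine ⟨fun i => if i ≤ s then P i else v, ⟨fun {i} hi => ?_, fun {i} hi => ?_⟩, by simp⟩
    · grind [hP.mem]
    · grind [hP.adj]

theorem IsDescent.isInducedPath (hP : IsDescent G L s P) (hL : IsLayering G L) :
    IsInducedPath G P s where
  eq_of_eq hi hj hij := hL.eq_of_mem (hP.mem hi) (hij ▸ hP.mem hj)
  adj_iff hi hj := by
    refine ⟨hL.eq_of_adj (hP.mem hi) (hP.mem hj), ?_⟩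
    rintro (rfl | rfl)
    exacts [hP.adj hj, (hP.adj hi).symm]

theorem IsDescent.edist_le (hP : IsDescent G L s P) {k : ℕ} (hk : m + k ≤ s) :
    G.edist (P m) (P (m + k)) ≤ k := by
  induction k with
  | zero => simp
  | succ k ih =>
    calc G.edist (P m) (P (m + (k + 1)))
        ≤ G.edist (P m) (P (m + k)) + G.edist (P (m + k)) (P (m + (k + 1))) :=
          SimpleGraph.edist_triangle
      _ ≤ k + 1 := add_le_add (ih (by lia))
          (SimpleGraph.edist_eq_one_iff_adj.2 (hP.adj (by lia))).le
      _ = (k + 1 : ℕ) := by norm_cast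

theorem IsDescent.splice (hP : IsDescent G L s P) (hQ : IsDescent G L s Q) {i : ℕ}
    (hi : i < s) (hadj : G.Adj (P i) (Q (i + 1))) :
    IsDescent G L s (fun j => if j ≤ i then P j else Q j) where
  mem {j} hj := by
    split
    exacts [hP.mem hj, hQ.mem hj]
  adj {j} hj := by
    rcases lt_trichotomy j i with hji | rfl | hji
    · simpa [hji.le, hji] using hP.adj hj
    · simpa using hadj
    · simpa [hji.not_ge, (hji.trans j.lt_succ_self).not_ge] using hQ.adj hj

/-- The vertices `w` and `w'` of layer `s` can be reached by descents that pass through the same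
vertex of layer `m`. -/
def HasCommonAncestor (G : SimpleGraph V) (L : ℕ → Finset V) (s m : ℕ) (w w' : V) : Prop :=
  ∃ P Q, IsDescent G L s P ∧ IsDescent G L s Q ∧ P s = w ∧ Q s = w' ∧ P m = Q m

theorem HasCommonAncestor.symm {w w' : V} (h : HasCommonAncestor G L s m w w') :
    HasCommonAncestor G L s m w' w := by
  obtain ⟨P, Q, hP, hQ, hw, hw', hPQ⟩ := h
  exact ⟨Q, P, hQ, hP, hw', hw, hPQ.symm⟩

theorem HasCommonAncestor.edist_le {w w' : V} (h : HasCommonAncestor G L s m w w') (hms : m ≤ s) :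
    G.edist w w' ≤ (2 * (s - m) : ℕ) := by
  obtain ⟨P, Q, hP, hQ, rfl, rfl, hPQ⟩ := h
  obtain ⟨k, rfl⟩ := Nat.exists_eq_add_of_le hms
  calc G.edist (P (m + k)) (Q (m + k))
      ≤ G.edist (P m) (P (m + k)) + G.edist (Q m) (Q (m + k)) := by
        rw [← hPQ, G.edist_comm (u := P m) (v := P (m + k))]
        exact SimpleGraph.edist_triangle
    _ ≤ k + k := add_le_add (hP.edist_le le_rfl) (hQ.edist_le le_rfl)
    _ = (2 * (m + k - m) : ℕ) := by
      rw [Nat.add_sub_cancel_left, two_mul, Nat.cast_add]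

theorem IsDescent.hasCommonAncestor_of_adj (hP : IsDescent G L s P) (hQ : IsDescent G L s Q)
    {i : ℕ} (hi : i < s) (hadj : G.Adj (P i) (Q (i + 1))) :
    HasCommonAncestor G L s i (P s) (Q s) :=
  ⟨P, _, hP, hP.splice hQ hi hadj, rfl, by simp [hi.not_ge], by simp⟩

theorem IsLayering.ne_and_not_adj_of_not_hasCommonAncestor (hL : IsLayering G L)
    (hP : IsDescent G L s P) (hQ : IsDescent G L s Q)
    (hm : ∀ i, m < i → i ≤ s → ¬ HasCommonAncestor G L s i (P s) (Q s)) {i j : ℕ}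
    (hmi : m < i) (his : i ≤ s) (hmj : m < j) (hjs : j ≤ s) :
    P i ≠ Q j ∧ ¬ G.Adj (P i) (Q j) := by
  refine ⟨fun heq => ?_, fun hadj => ?_⟩
  · obtain rfl := hL.eq_of_mem (hP.mem his) (heq ▸ hQ.mem hjs)
    exact hm i hmi his ⟨P, Q, hP, hQ, rfl, rfl, heq⟩
  · rcases hL.eq_of_adj (hP.mem his) (hQ.mem hjs) hadj with rfl | rfl
    · exact hm i hmi his (hP.hasCommonAncestor_of_adj hQ hjs hadj)
    · exact hm j hmj hjs (hQ.hasCommonAncestor_of_adj hP his hadj.symm).symm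

-- The three legs leave `P m = Q m`: two follow `P` and `Q` down, the third follows `P` up.
theorem IsLayering.nonempty_subdividedClaw_embedding (hL : IsLayering G L)
    (hP : IsDescent G L s P) (hQ : IsDescent G L s Q) (hPQ : P m = Q m) (htm : t ≤ m)
    (hms : m + t ≤ s) (hm : ∀ i, m < i → i ≤ s → ¬ HasCommonAncestor G L s i (P s) (Q s)) :
    Nonempty (subdividedClaw t ↪g G) := by
  have hfar {u v : V} {i j : ℕ} (hu : u ∈ L i) (hv : v ∈ L j) (hij : j + 2 ≤ i ∨ i + 2 ≤ j) :
      u ≠ v ∧ ¬ G.Adj u v :=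
    ⟨fun huv => by have := hL.eq_of_mem hu (huv ▸ hv); lia,
      fun huv => by have := hL.eq_of_adj hu hv huv; lia⟩
  refine _root_.nonempty_subdividedClaw_embedding (c := P m)
    (leg := ![fun k => P (m + k), fun k => Q (m + k), fun k => P (m - k)])
    (fun i => ?_) (fun i => ?_) fun {i j k l} hij hk hkt hl hlt => ?_
  · fin_cases i
    exacts [(hP.isInducedPath hL).add hms, (hQ.isInducedPath hL).add hms,
      (hP.isInducedPath hL).sub (by lia) htm]
  · fin_cases i
    exacts [rfl, hPQ.symm, rfl]
  · have hdown {R : ℕ → V} (hR : IsDescent G L s R) :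
        R (m + k) ≠ P (m - l) ∧ ¬ G.Adj (R (m + k)) (P (m - l)) :=
      hfar (hR.mem (by lia)) (hP.mem (by lia)) (by lia)
    have hup {R : ℕ → V} (hR : IsDescent G L s R) :
        P (m - k) ≠ R (m + l) ∧ ¬ G.Adj (P (m - k)) (R (m + l)) :=
      hfar (hP.mem (by lia)) (hR.mem (by lia)) (by lia)
    have hside {P Q : ℕ → V} (hP : IsDescent G L s P) (hQ : IsDescent G L s Q)
        (hm : ∀ i, m < i → i ≤ s → ¬ HasCommonAncestor G L s i (P s) (Q s)) :
        P (m + k) ≠ Q (m + l) ∧ ¬ G.Adj (P (m + k)) (Q (m + l)) :=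
      hL.ne_and_not_adj_of_not_hasCommonAncestor hP hQ hm (by lia) (by lia) (by lia) (by lia)
    fin_cases i <;> fin_cases j
    exacts [absurd rfl hij, hside hP hQ hm, hdown hP,
      hside hQ hP fun i hi his h => hm i hi his h.symm, absurd rfl hij, hdown hQ,
      hup hP, hup hQ, absurd rfl hij]

theorem IsLayering.edist_le_of_hasCommonAncestor (hL : IsLayering G L)
    (hclaw : IsEmpty (subdividedClaw t ↪g G)) (hts : t ≤ s) {w w' : V}
    (h : HasCommonAncestor G L s t w w') : G.edist w w' ≤ (2 * t : ℕ) := by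
  let m := Nat.findGreatest (fun m => HasCommonAncestor G L s m w w') s
  have hm : HasCommonAncestor G L s m w w' :=
    Nat.findGreatest_spec (P := fun m => HasCommonAncestor G L s m w w') hts h
  have htm : t ≤ m := Nat.le_findGreatest hts h
  have hlast : s < m + t := by
    obtain ⟨P, Q, hP, hQ, rfl, rfl, hPQ⟩ := hm
    by_contra! hms
    exact not_isEmpty_iff.2 (hL.nonempty_subdividedClaw_embedding hP hQ hPQ htm hms
      fun i hi his => Nat.findGreatest_is_greatest hi his) hclaw
  exact (hm.edist_le (Nat.findGreatest_le s)).trans (by norm_cast; lia)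

end Descent

section LayerSize

variable {V : Type*} {G : SimpleGraph V} [G.LocallyFinite] {L : ℕ → Finset V} {D t : ℕ}

theorem IsLayering.card_le_pow (hL : IsLayering G L) (hD : ∀ v, G.degree v ≤ D) (s : ℕ) :
    (L s).card ≤ D ^ s := by
  induction s with
  | zero => simpa using hL.card_root_le
  | succ s ih =>
    have hsub : L (s + 1) ⊆ neighborsIn G (L s) (L (s + 1)) := fun v hv =>
      mem_neighborsIn.2 ⟨hv, hL.exists_adj s v hv⟩
    calc (L (s + 1)).card ≤ (L s).card * D :=
          (Finset.card_le_card hsub).trans (card_neighborsIn_le hD _ _)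
      _ ≤ D ^ s * D := by gcongr
      _ = D ^ (s + 1) := (pow_succ _ _).symm

theorem IsLayering.card_filter_isDescent_le (hL : IsLayering G L)
    (hclaw : IsEmpty (subdividedClaw t ↪g G)) (hD : ∀ v, G.degree v ≤ D) {s : ℕ} (hts : t ≤ s)
    (a : V) :
    {w ∈ L s | ∃ P, IsDescent G L s P ∧ P t = a ∧ P s = w}.card ≤ (D + 1) ^ (2 * t) := by
  set X := {w ∈ L s | ∃ P, IsDescent G L s P ∧ P t = a ∧ P s = w}
  rcases X.eq_empty_or_nonempty with hX | ⟨w, hw⟩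
  · simp [hX]
  obtain ⟨-, P, hP, hPa, hPw⟩ := Finset.mem_filter.1 hw
  refine card_le_of_edist_le hD (u := w) fun w' hw' => ?_
  obtain ⟨-, Q, hQ, hQa, hQw'⟩ := Finset.mem_filter.1 hw'
  exact hL.edist_le_of_hasCommonAncestor hclaw hts
    ⟨P, Q, hP, hQ, hPw, hQw', hPa.trans hQa.symm⟩

theorem IsLayering.card_le (hL : IsLayering G L) (hclaw : IsEmpty (subdividedClaw t ↪g G))
    (hD : ∀ v, G.degree v ≤ D) (s : ℕ) : (L s).card ≤ (D + 1) ^ (3 * t) := by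
  have hpow {i : ℕ} : (L i).card ≤ (D + 1) ^ i :=
    (hL.card_le_pow hD i).trans (Nat.pow_le_pow_left D.le_succ i)
  rcases le_total s t with hst | hts
  · exact hpow.trans (Nat.pow_le_pow_right D.succ_pos (by lia))
  have hcover : L s ⊆ (L t).biUnion
      fun a => {w ∈ L s | ∃ P, IsDescent G L s P ∧ P t = a ∧ P s = w} := fun w hw => by
    obtain ⟨P, hP, hPw⟩ := hL.exists_isDescent hw
    exact Finset.mem_biUnion.2
      ⟨P t, hP.mem hts, Finset.mem_filter.2 ⟨hw, P, hP, rfl, hPw⟩⟩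
  calc (L s).card ≤ (L t).card * (D + 1) ^ (2 * t) :=
        (Finset.card_le_card hcover).trans <| Finset.card_biUnion_le_card_mul _ _ _
          fun a _ => hL.card_filter_isDescent_le hclaw hD hts a
    _ ≤ (D + 1) ^ t * (D + 1) ^ (2 * t) := by gcongr; exact hpow
    _ = (D + 1) ^ (3 * t) := by ring

theorem IsExploration.card_neighborsIn_le {r : ℕ} {W : Finset V} (h : IsExploration G L r W)
    (hclaw : IsEmpty (subdividedClaw t ↪g G)) (hD : ∀ v, G.degree v ≤ D) :
    (neighborsIn G (L r) W).card ≤ (D + 1) ^ (3 * t + 1) :=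
  calc (neighborsIn G (L r) W).card ≤ (L r).card * D := _root_.card_neighborsIn_le hD _ _
    _ ≤ (D + 1) ^ (3 * t) * (D + 1) := by
      gcongr
      exacts [h.card_le hclaw hD r, D.le_succ]
    _ = (D + 1) ^ (3 * t + 1) := (pow_succ _ _).symm

end LayerSize

section WeightPerturbation

variable {ι 𝕜 : Type*} [NormedField 𝕜] {f g : ι → 𝕜} {M ε : ℝ} {K : Finset ι}

theorem norm_prod_sub_prod_le (hg : ∀ i, ‖g i‖ ≤ M) (hfg : ∀ i, ‖f i - g i‖ ≤ ε)
    (S : Finset ι) :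
    ‖∏ i ∈ S, f i - ∏ i ∈ S, g i‖ ≤ (M + ε) ^ S.card - M ^ S.card := by
  induction S using Finset.induction_on with
  | empty => simp
  | insert j S hj ih =>
    have hnorm : ‖∏ i ∈ S, g i‖ ≤ M ^ S.card := by
      rw [norm_prod, ← Finset.prod_const]
      exact Finset.prod_le_prod (fun i _ => norm_nonneg _) fun i _ => hg i
    have hf : ‖f j‖ ≤ M + ε :=
      (norm_le_norm_add_norm_sub' _ _).trans (add_le_add (hg j) (hfg j))
    have hMε : 0 ≤ M + ε := (norm_nonneg _).trans hf
    have hε : 0 ≤ ε := (norm_nonneg _).trans (hfg j)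
    rw [Finset.prod_insert hj, Finset.prod_insert hj, Finset.card_insert_of_notMem hj]
    calc ‖f j * ∏ i ∈ S, f i - g j * ∏ i ∈ S, g i‖
        = ‖f j * (∏ i ∈ S, f i - ∏ i ∈ S, g i) + (f j - g j) * ∏ i ∈ S, g i‖ := by ring_nf
      _ ≤ ‖f j‖ * ‖∏ i ∈ S, f i - ∏ i ∈ S, g i‖ + ‖f j - g j‖ * ‖∏ i ∈ S, g i‖ := by
        simpa only [norm_mul] using norm_add_le (f j * _) ((f j - g j) * _)
      _ ≤ (M + ε) * ((M + ε) ^ S.card - M ^ S.card) + ε * M ^ S.card := by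
        gcongr
        exact hfg j
      _ = (M + ε) ^ (S.card + 1) - M ^ (S.card + 1) := by ring

theorem sum_powerset_pow_card {R : Type*} [CommSemiring R] (a : R) (K : Finset ι) :
    ∑ S ∈ K.powerset, a ^ S.card = (1 + a) ^ K.card := by
  simp only [← Finset.prod_const, Finset.prod_one_add]

theorem add_pow_sub_pow_mono {a : ℝ} (ha : 1 ≤ a) (hε : 0 ≤ ε) {m n : ℕ} (hmn : m ≤ n) :
    (a + ε) ^ m - a ^ m ≤ (a + ε) ^ n - a ^ n := by
  induction n, hmn using Nat.le_induction with
  | base => exact le_rfl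
  | succ n _ ih =>
    have hpow : a ^ n ≤ (a + ε) ^ n := pow_le_pow_left₀ (by linarith) (by linarith) n
    have hpos : 0 ≤ a ^ n := by positivity
    refine ih.trans ?_
    rw [pow_succ, pow_succ]
    nlinarith

theorem sum_powerset_norm_prod_sub_prod_le (hM : 0 ≤ M) (hε : 0 ≤ ε) (hg : ∀ i, ‖g i‖ ≤ M)
    (hfg : ∀ i, ‖f i - g i‖ ≤ ε) {b : ℕ} (hK : K.card ≤ b) :
    ∑ S ∈ K.powerset, ‖∏ i ∈ S, f i - ∏ i ∈ S, g i‖ ≤ (1 + M + ε) ^ b - (1 + M) ^ b :=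
  calc ∑ S ∈ K.powerset, ‖∏ i ∈ S, f i - ∏ i ∈ S, g i‖
      ≤ ∑ S ∈ K.powerset, ((M + ε) ^ S.card - M ^ S.card) :=
        Finset.sum_le_sum fun S _ => norm_prod_sub_prod_le hg hfg S
    _ = (1 + M + ε) ^ K.card - (1 + M) ^ K.card := by
        rw [Finset.sum_sub_distrib, sum_powerset_pow_card, sum_powerset_pow_card, add_assoc]
    _ ≤ (1 + M + ε) ^ b - (1 + M) ^ b := add_pow_sub_pow_mono (by linarith) hε hK

theorem prod_one_add_le_pow {x : ι → ℝ} (hx : ∀ i, 0 ≤ x i) (hxM : ∀ i, x i ≤ M) (hM : 0 ≤ M)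
    {b : ℕ} (hK : K.card ≤ b) : ∏ i ∈ K, (1 + x i) ≤ (1 + M) ^ b :=
  calc ∏ i ∈ K, (1 + x i) ≤ ∏ _i ∈ K, (1 + M) :=
        Finset.prod_le_prod (fun i _ => add_nonneg zero_le_one (hx i)) fun i _ => by
          gcongr; exact hxM i
    _ = (1 + M) ^ K.card := Finset.prod_const _
    _ ≤ (1 + M) ^ b := pow_le_pow_right₀ (by linarith) hK

theorem exists_pos_add_pow_sub_pow_lt (a : ℝ) (b : ℕ) {η : ℝ} (hη : 0 < η) :
    ∃ ε > 0, (a + ε) ^ b - a ^ b < η := by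
  have hcont : Filter.Tendsto (fun ε : ℝ => (a + ε) ^ b - a ^ b) (nhds 0) (nhds 0) := by
    have : Continuous fun ε : ℝ => (a + ε) ^ b - a ^ b := by fun_prop
    simpa using this.tendsto 0
  obtain ⟨r, hr, hball⟩ := Metric.eventually_nhds_iff.1 (hcont.eventually_lt_const hη)
  refine ⟨r / 2, half_pos hr, hball ?_⟩
  rw [Real.dist_0_eq_abs, abs_of_pos (half_pos hr)]
  exact half_lt_self hr

end WeightPerturbation

theorem indepSum_ne_zero_of_norm_sub_le {V : Type*} {G : SimpleGraph V} [G.LocallyFinite]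
    {t D b : ℕ} {x : V → ℝ} {lam : V → ℂ} {M ε : ℝ} (hclaw : IsEmpty (subdividedClaw t ↪g G))
    (hD : ∀ v, G.degree v ≤ D) (hb : b = (D + 1) ^ (3 * t + 1)) (hM : 0 ≤ M) (hε : 0 ≤ ε)
    (hεb : (1 + M + ε) ^ b - (1 + M) ^ b ≤ (1 / (2 * (1 + M) ^ b)) ^ 2)
    (hx : ∀ v, 0 ≤ x v) (hxM : ∀ v, x v ≤ M) (hlam : ∀ v, ‖lam v - x v‖ ≤ ε) (W : Finset V) :
    indepSum G lam W ≠ 0 := by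
  have hnorm (v : V) : ‖(x v : ℂ)‖ ≤ M := (Complex.norm_of_nonneg (hx v)).trans_le (hxM v)
  refine indepSum_ne_zero hx (by positivity) (hb ▸ Nat.one_le_pow _ _ D.succ_pos)
    (fun K hK => ?_)
    (fun K hK => (sum_powerset_norm_prod_sub_prod_le hM hε hnorm hlam hK).trans hεb)
    (fun L r W h => hb ▸ h.card_neighborsIn_le hclaw hD)
  calc 2 * (1 / (2 * (1 + M) ^ b)) * ∏ v ∈ K, (1 + x v)
      ≤ 2 * (1 / (2 * (1 + M) ^ b)) * (1 + M) ^ b := by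
        gcongr
        exact prod_one_add_le_pow hx hxM hM hK
    _ = 1 := by field_simp

/-- for every `λ₀ > 0`, `t ≥ 1`, `Δ ≥ 3` there is an open set
`F ⊆ ℂ` containing `[0, λ₀]` such that the multivariate independence polynomial
of every finite `S_{t,t,t}`-free simple graph of maximum degree at most `Δ` is
nonzero whenever all vertex weights lie in `F`. -/
theorem stmt1 (lam₀ : ℝ) (hlam₀ : 0 < lam₀) (t Δ : ℕ) (ht : 1 ≤ t) (hΔ : 3 ≤ Δ) :
    ∃ F : Set ℂ, IsOpen F ∧ (∀ x : ℝ, 0 ≤ x → x ≤ lam₀ → (x : ℂ) ∈ F) ∧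
      ∀ (V : Type) [Fintype V] (G : SimpleGraph V),
        IsEmpty (subdividedClaw t ↪g G) →
        (∀ v : V, (G.neighborSet v).ncard ≤ Δ) →
        ∀ lam : V → ℂ, (∀ v, lam v ∈ F) → indepPoly G lam ≠ 0 := by
  obtain ⟨ε, hε, hεb⟩ := exists_pos_add_pow_sub_pow_lt (1 + lam₀) ((Δ + 1) ^ (3 * t + 1))
    (η := (1 / (2 * (1 + lam₀) ^ (Δ + 1) ^ (3 * t + 1))) ^ 2) (by positivity)
  refine ⟨Metric.thickening ε (Complex.ofReal '' Set.Icc 0 lam₀), Metric.isOpen_thickening,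
    fun x hx0 hx => Metric.self_subset_thickening hε _ ⟨x, ⟨hx0, hx⟩, rfl⟩, ?_⟩
  intro V _ G hclaw hdeg lam hlam
  have hnear (v : V) : ∃ x : ℝ, (0 ≤ x ∧ x ≤ lam₀) ∧ ‖lam v - x‖ ≤ ε := by
    obtain ⟨_, ⟨x, hx, rfl⟩, hdist⟩ := Metric.mem_thickening_iff.1 (hlam v)
    exact ⟨x, hx, (dist_eq_norm (lam v) x ▸ hdist).le⟩
  choose x hx hclose using hnear
  have hdegree (v : V) : G.degree v ≤ Δ :=
    (Set.ncard_eq_toFinset_card' (G.neighborSet v)).symm.trans_le (hdeg v)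
  rw [indepPoly_eq_indepSum]
  exact indepSum_ne_zero_of_norm_sub_le hclaw hdegree rfl hlam₀.le hε.le hεb.le
    (fun v => (hx v).1) (fun v => (hx v).2) hclose _
end

section
/- Let k be a positive integer and let G = (V,E) be a finite claw-free simple graph whose largest clique has size at most k and each of whose connected components contains a simplicial clique. Then for every assignment of weights λ = (λ_v)_{v∈V} with λ_v ∈ R(k) for all v, the multivariate independence polynomial satisfies Z_{G,λ} ≠ 0. -/
attribute [local instance] Classical.propDecidable

/-- `K` is a simplicial clique in `G`: `K` is a clique and, for every `v ∈ K`,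
the neighbours of `v` outside `K` induce a clique. -/
def IsSimplicialClique {V : Type*} (G : SimpleGraph V) (K : Set V) : Prop :=
  G.IsClique K ∧ ∀ v ∈ K, G.IsClique {w : V | G.Adj v w ∧ w ∉ K}

/-- Every connected component of `G` contains a (nonempty) simplicial clique. -/
def EveryComponentHasSimplicialClique {V : Type*} (G : SimpleGraph V) : Prop :=
  ∀ c : G.ConnectedComponent, ∃ K : Set V, K.Nonempty ∧
    (∀ v ∈ K, G.connectedComponentMk v = c) ∧ IsSimplicialClique G K

/-!
For `K` a clique of `W`, sorting independent sets by their vertex in `K`, if any, gives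
`Z(W) / Z(W \ K) = 1 + ∑ v ∈ K, λ_v · Z(W \ K \ N(v)) / Z(W \ K)`.
If `K` is simplicial in `W` and `G` is claw-free, then `(W \ K) ∩ N(v)` is a simplicial clique of
`W \ K`, so each quotient on the right is the inverse of one of the same shape on a smaller set.
By induction the latter has real part at least `1/2`, and `Re (λ / r) ≥ Re λ - ‖λ‖` whenever
`Re r ≥ 1/2`. Hence the bound `Re (Z(W) / Z(W \ K)) ≥ 1/2` propagates as soon as
`∑ v ∈ K, (‖λ_v‖ - Re λ_v) ≤ 1/2` for all cliques `K`. For cliques of size at most `k` this holds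
on `R(k)`, which is the inside `‖z‖ - Re z < 1/(2k)` of a parabola with focus `0`.
-/

theorem norm_inv_sub_one_le_one {r : ℂ} (hr : 1 / 2 ≤ r.re) : ‖r⁻¹ - 1‖ ≤ 1 := by
  have hr0 : r ≠ 0 := by
    rintro rfl
    norm_num at hr
  have hsub : r⁻¹ - 1 = (1 - r) / r := by field_simp
  rw [hsub, norm_div, div_le_one (norm_pos_iff.2 hr0), ← sq_le_sq₀ (norm_nonneg _) (norm_nonneg _),
    Complex.sq_norm, Complex.sq_norm, Complex.normSq_apply, Complex.normSq_apply]
  simp only [Complex.sub_re, Complex.sub_im, Complex.one_re, Complex.one_im]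
  linarith

theorem re_sub_norm_le_re_div (z : ℂ) {r : ℂ} (hr : 1 / 2 ≤ r.re) :
    z.re - ‖z‖ ≤ (z / r).re := by
  have hdiff : ‖z / r - z‖ ≤ ‖z‖ := by
    calc ‖z / r - z‖ = ‖z‖ * ‖r⁻¹ - 1‖ := by rw [← norm_mul, mul_sub_one, div_eq_mul_inv]
      _ ≤ ‖z‖ := mul_le_of_le_one_right (norm_nonneg _) (norm_inv_sub_one_le_one hr)
  have hre := (abs_le.1 ((Complex.abs_re_le_norm _).trans hdiff)).1
  rw [Complex.sub_re] at hre
  linarith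

theorem mem_parabR_iff_norm_sub_re_lt {k : ℝ} (hk : 0 < k) {z : ℂ} :
    z ∈ parabR k ↔ ‖z‖ - z.re < 1 / (2 * k) := by
  set t : ℝ := 1 / (2 * k) with ht
  have ht0 : 0 < t := by positivity
  have hrhs : z.re / k + 1 / (4 * k ^ 2) = 2 * t * z.re + t ^ 2 := by
    rw [ht]
    field_simp
    ring
  have hnorm : ‖z‖ ^ 2 = z.re ^ 2 + z.im ^ 2 := by
    rw [Complex.sq_norm, Complex.normSq_apply]
    ring
  rw [parabR, Set.mem_ofPred_eq, hrhs, sub_lt_iff_lt_add]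
  constructor <;> intro h
  · have hpos : 0 ≤ t + z.re := by nlinarith [sq_nonneg z.im]
    exact lt_of_pow_lt_pow_left₀ 2 hpos (by linarith)
  · have hsq := pow_lt_pow_left₀ h (norm_nonneg z) two_ne_zero
    linarith

theorem sum_norm_sub_re_le_half_of_mem_parabR {ι : Type*} {s : Finset ι} {lam : ι → ℂ} {k : ℝ}
    (hk : 0 < k) (hcard : (s.card : ℝ) ≤ k) (hlam : ∀ v ∈ s, lam v ∈ parabR k) :
    ∑ v ∈ s, (‖lam v‖ - (lam v).re) ≤ 1 / 2 := by
  calc ∑ v ∈ s, (‖lam v‖ - (lam v).re) ≤ s.card • (1 / (2 * k)) :=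
        Finset.sum_le_card_nsmul _ _ _ fun v hv =>
          ((mem_parabR_iff_norm_sub_re_lt hk).1 (hlam v hv)).le
    _ ≤ k * (1 / (2 * k)) := by
        rw [nsmul_eq_mul]
        gcongr
    _ = 1 / 2 := by field_simp

section

variable {V : Type*} {G : SimpleGraph V}

theorem subdividedClaw_one_adj_iff {x y : Option (Fin 3 × Fin 1)} :
    (subdividedClaw 1).Adj x y ↔ (x = none ↔ y ≠ none) := by
  rcases x with _ | ⟨i, j⟩ <;> rcases y with _ | ⟨i', j'⟩ <;> simp [subdividedClaw]

theorem nonempty_subdividedClaw_one_embedding {u : V} {f : Fin 3 → V}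
    (hf : Function.Injective f) (hadj : ∀ i, G.Adj u (f i)) (hindep : ∀ i j, ¬G.Adj (f i) (f j)) :
    Nonempty (subdividedClaw 1 ↪g G) := by
  refine ⟨⟨⟨fun x => x.elim u fun p => f p.1, ?_⟩, ?_⟩⟩
  · rintro (_ | ⟨i, j⟩) (_ | ⟨i', j'⟩) h
    · rfl
    · exact absurd h (hadj i').ne
    · exact absurd h (hadj i).ne'
    · exact congrArg some (Prod.ext (hf h) (Subsingleton.elim j j'))
  · rintro (_ | ⟨i, j⟩) (_ | ⟨i', j'⟩) <;> rw [subdividedClaw_one_adj_iff]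
    · exact iff_of_false G.irrefl (by simp)
    · exact iff_of_true (hadj i') (by simp)
    · exact iff_of_true (hadj i).symm (by simp)
    · exact iff_of_false (hindep i i') (by simp)

theorem adj_or_adj_or_adj_of_clawFree (hclaw : IsEmpty (subdividedClaw 1 ↪g G)) {u a b c : V}
    (ha : G.Adj u a) (hb : G.Adj u b) (hc : G.Adj u c) (hab : a ≠ b) (hac : a ≠ c) (hbc : b ≠ c) :
    G.Adj a b ∨ G.Adj a c ∨ G.Adj b c := by
  by_contra! hn
  refine not_nonempty_iff.2 hclaw
    (nonempty_subdividedClaw_one_embedding (u := u) (f := ![a, b, c]) ?_ ?_ ?_)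
  · simp [Function.Injective, Fin.forall_fin_succ, hab, hac, hbc, hab.symm, hac.symm, hbc.symm]
  · simp [Fin.forall_fin_succ, ha, hb, hc]
  · simp [Fin.forall_fin_succ, hn, G.adj_comm b a, G.adj_comm c a, G.adj_comm c b]

/-- `K` is a simplicial clique of the induced subgraph `G[W]`; both sets are finsets of vertices
of `G`, so that vertices can be deleted without changing the vertex type. -/
structure IsSimplicialCliqueOn (G : SimpleGraph V) (W K : Finset V) : Prop where
  subset : K ⊆ W
  isClique : G.IsClique (K : Set V)
  isClique_nbrs : ∀ v ∈ K, G.IsClique ({w ∈ W \ K | G.Adj v w} : Finset V)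

/-- Every component of `G[W]` contains a simplicial clique of `G[W]`. It is stated for nonempty
unions `A` of components, that is, subsets with no edge to the rest of `W`, so that no walks
inside `W` are needed. -/
def EveryComponentHasSimplicialCliqueOn (G : SimpleGraph V) (W : Finset V) : Prop :=
  ∀ A ⊆ W, A.Nonempty → (∀ a ∈ A, ∀ b ∈ W, G.Adj a b → b ∈ A) →
    ∃ K ⊆ A, K.Nonempty ∧ IsSimplicialCliqueOn G W K

theorem IsSimplicialCliqueOn.mono {W W' K : Finset V} (hK : IsSimplicialCliqueOn G W K)
    (hW : W' ⊆ W) (hKW' : K ⊆ W') : IsSimplicialCliqueOn G W' K where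
  subset := hKW'
  isClique := hK.isClique
  isClique_nbrs v hv := (hK.isClique_nbrs v hv).subset <| by gcongr

theorem IsSimplicialCliqueOn.nbrs {W K : Finset V} (hK : IsSimplicialCliqueOn G W K)
    (hclaw : IsEmpty (subdividedClaw 1 ↪g G)) {v : V} (hv : v ∈ K) :
    IsSimplicialCliqueOn G (W \ K) {w ∈ W \ K | G.Adj v w} where
  subset := Finset.filter_subset _ _
  isClique := hK.isClique_nbrs v hv
  isClique_nbrs u hu x hx y hy hxy := by
    simp only [Finset.mem_filter, Finset.mem_sdiff, Finset.coe_filter, Set.mem_ofPred_eq]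
      at hu hx hy
    have hvx : v ≠ x := by
      rintro rfl
      exact hx.1.1.2 hv
    have hvy : v ≠ y := by
      rintro rfl
      exact hy.1.1.2 hv
    have hclaw_u := adj_or_adj_or_adj_of_clawFree hclaw hu.2.symm hx.2 hy.2 hvx hvy hxy
    tauto

theorem EveryComponentHasSimplicialCliqueOn.sdiff {W K : Finset V}
    (hW : EveryComponentHasSimplicialCliqueOn G W) (hclaw : IsEmpty (subdividedClaw 1 ↪g G))
    (hK : IsSimplicialCliqueOn G W K) : EveryComponentHasSimplicialCliqueOn G (W \ K) := by
  intro A hA hne hclosed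
  by_cases h : ∃ a ∈ A, ∃ v ∈ K, G.Adj v a
  · obtain ⟨a, ha, v, hv, hva⟩ := h
    have hN := hK.nbrs hclaw hv
    have haN : a ∈ ({w ∈ W \ K | G.Adj v w} : Finset V) := Finset.mem_filter.2 ⟨hA ha, hva⟩
    refine ⟨_, fun x hx => ?_, ⟨a, haN⟩, hN⟩
    rcases eq_or_ne a x with rfl | hax
    · exact ha
    · exact hclosed a ha x (hN.subset hx) (hN.isClique haN hx hax)
  · push Not at h
    have hclosed' : ∀ a ∈ A, ∀ b ∈ W, G.Adj a b → b ∈ A := fun a ha b hb hab =>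
      hclosed a ha b (Finset.mem_sdiff.2 ⟨hb, fun hbK => h a ha b hbK hab.symm⟩) hab
    obtain ⟨L, hLA, hLne, hL⟩ := hW A (hA.trans Finset.sdiff_subset) hne hclosed'
    exact ⟨L, hLA, hLne, hL.mono Finset.sdiff_subset (hLA.trans hA)⟩

variable [Fintype V]

theorem IsSimplicialClique.on_univ {K : Set V} (hK : IsSimplicialClique G K) :
    IsSimplicialCliqueOn G Finset.univ K.toFinset where
  subset := Finset.subset_univ _
  isClique := by simpa using hK.1
  isClique_nbrs v hv := by simpa [and_comm] using hK.2 v (Set.mem_toFinset.1 hv)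

theorem EveryComponentHasSimplicialClique.on_univ (h : EveryComponentHasSimplicialClique G) :
    EveryComponentHasSimplicialCliqueOn G Finset.univ := by
  rintro A - ⟨a, ha⟩ hclosed
  have hreach : ∀ b, G.Reachable a b → b ∈ A := fun b hab => by
    rw [SimpleGraph.reachable_iff_reflTransGen] at hab
    induction hab with
    | refl => exact ha
    | tail _ hbc ih => exact hclosed _ ih _ (Finset.mem_univ _) hbc
  obtain ⟨K, hne, hcomp, hK⟩ := h (G.connectedComponentMk a)
  exact ⟨K.toFinset,
    fun v hv => hreach v (SimpleGraph.ConnectedComponent.exact (hcomp v (by simpa using hv))).symm,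
    Set.toFinset_nonempty.2 hne, hK.on_univ⟩

theorem indepPolyOn_empty (G : SimpleGraph V) (lam : V → ℂ) : indepPolyOn G lam ∅ = 1 := by
  simp [indepPolyOn]

theorem indepPolyOn_insert (G : SimpleGraph V) (lam : V → ℂ) {W : Finset V} {v : V} (hv : v ∉ W) :
    indepPolyOn G lam (insert v W) =
      indepPolyOn G lam W + lam v * indepPolyOn G lam {w ∈ W | ¬G.Adj v w} := by
  have hindep (S : Finset V) : (∀ x ∈ insert v S, ∀ y ∈ insert v S, ¬G.Adj x y) ↔
      (∀ w ∈ S, ¬G.Adj v w) ∧ ∀ x ∈ S, ∀ y ∈ S, ¬G.Adj x y := by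
    simp only [Finset.forall_mem_insert, SimpleGraph.irrefl, not_false_eq_true, true_and,
      G.adj_comm _ v, forall_and]
    tauto
  have hpow : ({w ∈ W | ¬G.Adj v w} : Finset V).powerset =
      {S ∈ W.powerset | ∀ w ∈ S, ¬G.Adj v w} := by
    ext S
    simp only [Finset.mem_powerset, Finset.mem_filter, Finset.subset_iff, forall_and]
  rw [indepPolyOn, Finset.sum_powerset_insert hv]
  congr 1
  rw [indepPolyOn, hpow, Finset.sum_filter, Finset.mul_sum]
  refine Finset.sum_congr rfl fun S hS => ?_
  have hvS : v ∉ S := fun h => hv (Finset.mem_powerset.1 hS h)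
  rw [if_congr (hindep S) rfl rfl, ite_and, Finset.prod_insert hvS, mul_ite, mul_ite, mul_zero]

theorem indepPolyOn_union_of_isClique (lam : V → ℂ) {W K : Finset V} (hKW : Disjoint K W)
    (hK : G.IsClique (K : Set V)) :
    indepPolyOn G lam (K ∪ W) = indepPolyOn G lam W +
      ∑ v ∈ K, lam v * indepPolyOn G lam {w ∈ W | ¬G.Adj v w} := by
  induction K using Finset.induction_on with
  | empty => simp
  | insert v K hvK ih =>
    rw [Finset.disjoint_insert_left] at hKW
    rw [Finset.coe_insert, SimpleGraph.isClique_insert_of_notMem (by simpa using hvK)] at hK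
    have hfilter : {w ∈ K ∪ W | ¬G.Adj v w} = {w ∈ W | ¬G.Adj v w} := by
      rw [Finset.filter_union, Finset.filter_false_of_mem fun w hw => not_not.2 (hK.2 w hw),
        Finset.empty_union]
    rw [Finset.insert_union, indepPolyOn_insert _ _ (by simp [hvK, hKW.1]), ih hKW.2 hK.1,
      Finset.sum_insert hvK, hfilter]
    ring

theorem half_le_re_indepPolyOn_div_sdiff {lam : V → ℂ} {W K : Finset V} (hKW : K ⊆ W)
    (hK : G.IsClique (K : Set V)) (hsum : ∑ v ∈ K, (‖lam v‖ - (lam v).re) ≤ 1 / 2)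
    (hne : indepPolyOn G lam (W \ K) ≠ 0)
    (hratio : ∀ v ∈ K, 1 / 2 ≤
      (indepPolyOn G lam (W \ K) / indepPolyOn G lam {w ∈ W \ K | ¬G.Adj v w}).re) :
    1 / 2 ≤ (indepPolyOn G lam W / indepPolyOn G lam (W \ K)).re := by
  have hexpand : indepPolyOn G lam W / indepPolyOn G lam (W \ K) = 1 + ∑ v ∈ K,
      lam v / (indepPolyOn G lam (W \ K) / indepPolyOn G lam {w ∈ W \ K | ¬G.Adj v w}) := by
    have hunion := indepPolyOn_union_of_isClique lam Finset.disjoint_sdiff hK (W := W \ K)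
    rw [Finset.union_sdiff_of_subset hKW] at hunion
    simp only [hunion, add_div, div_self hne, Finset.sum_div, div_div_eq_mul_div]
  have hterms := Finset.sum_le_sum fun v hv => re_sub_norm_le_re_div (lam v) (hratio v hv)
  rw [hexpand, Complex.add_re, Complex.one_re, Complex.re_sum]
  rw [Finset.sum_sub_distrib] at hsum hterms
  linarith

theorem indepPolyOn_ne_zero_and_half_le_re_div_sdiff (hclaw : IsEmpty (subdividedClaw 1 ↪g G))
    {lam : V → ℂ}
    (hlam : ∀ K : Finset V, G.IsClique (K : Set V) → ∑ v ∈ K, (‖lam v‖ - (lam v).re) ≤ 1 / 2)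
    {W : Finset V} (hW : EveryComponentHasSimplicialCliqueOn G W) :
    indepPolyOn G lam W ≠ 0 ∧ ∀ K, IsSimplicialCliqueOn G W K →
      1 / 2 ≤ (indepPolyOn G lam W / indepPolyOn G lam (W \ K)).re := by
  induction W using Finset.strongInduction with
  | H W ih =>
    have hratio : ∀ K, K.Nonempty → IsSimplicialCliqueOn G W K →
        1 / 2 ≤ (indepPolyOn G lam W / indepPolyOn G lam (W \ K)).re := by
      intro K hKne hK
      obtain ⟨hne, hsub⟩ := ih (W \ K) (Finset.sdiff_ssubset hK.subset hKne) (hW.sdiff hclaw hK)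
      refine half_le_re_indepPolyOn_div_sdiff hK.subset hK.isClique (hlam K hK.isClique) hne
        fun v hv => ?_
      rw [Finset.filter_not]
      exact hsub _ (hK.nbrs hclaw hv)
    have hne : indepPolyOn G lam W ≠ 0 := by
      rcases W.eq_empty_or_nonempty with rfl | hWne
      · simp [indepPolyOn_empty]
      · obtain ⟨K, -, hKne, hK⟩ := hW W subset_rfl hWne fun _ _ b hb _ => hb
        intro hzero
        have hre := hratio K hKne hK
        norm_num [hzero] at hre
    refine ⟨hne, fun K hK => ?_⟩
    rcases K.eq_empty_or_nonempty with rfl | hKne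
    · norm_num [div_self hne]
    · exact hratio K hKne hK

theorem stmt2_general (hclaw : IsEmpty (subdividedClaw 1 ↪g G))
    (hsimp : EveryComponentHasSimplicialClique G) {lam : V → ℂ}
    (hlam : ∀ K : Finset V, G.IsClique (K : Set V) → ∑ v ∈ K, (‖lam v‖ - (lam v).re) ≤ 1 / 2) :
    indepPoly G lam ≠ 0 :=
  (indepPolyOn_ne_zero_and_half_le_re_div_sdiff hclaw hlam hsimp.on_univ).1

end

/-- if `G` is a finite claw-free graph whose largest clique has
size at most `k` and each of whose connected components contains a simplicial
clique, then the multivariate independence polynomial is nonzero whenever all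
vertex weights lie in the parabolic region `R(k)`. -/
theorem stmt2 {V : Type} [Fintype V] (k : ℕ) (hk : 1 ≤ k) (G : SimpleGraph V)
    (hclaw : IsEmpty (subdividedClaw 1 ↪g G))
    (hclique : ∀ s : Finset V, G.IsClique (s : Set V) → s.card ≤ k)
    (hsimp : EveryComponentHasSimplicialClique G)
    (lam : V → ℂ) (hlam : ∀ v, lam v ∈ parabR k) :
    indepPoly G lam ≠ 0 := by
  refine stmt2_general hclaw hsimp fun K hK => ?_
  exact sum_norm_sub_re_le_half_of_mem_parabR (by exact_mod_cast hk)
    (by exact_mod_cast hclique K hK) fun v _ => hlam v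
end
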